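/- Suppose f : [0,1]^M → [0,1]^M is continuous and of the form f = (f₁,...,f_M) where the first M₁ coordinates f₁,...,f_{M₁} depend only on x₁,...,x_{M₁}. Then the restricted system x_i = f_i(x₁,...,x_{M₁}), i = 1,...,M₁, has a solution in [0,1]^{M₁}, and for any such solution (x̄₁,...,x̄_{M₁}) there exist x̄_{M₁+1},...,x̄_M ∈ [0,1] such that (x̄₁,...,x̄_M) solves the full system x = f(x). -/

import Mathlib

/-! Brouwer's theorem on the cube via a mod 2 cubical cup product. -/

namespace CubeBrouwer

variable {ι : Type} [DecidableEq ι]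

/-- Unit step in direction `d`. -/
def stp (d : ι) : ι → ℕ := Pi.single d 1

/-- Cubical cochain `dL₁ ∪ ... ∪ dLₘ` mod 2 evaluated at the cube based at `x` spanned by `A`. -/
def W : List ((ι → ℕ) → ZMod 2) → Finset ι → (ι → ℕ) → ZMod 2
  | [], _, _ => 1
  | L :: Ls, A, x => ∑ d ∈ A, (L (x + stp d) + L x) * W Ls (A.erase d) (x + stp d)

lemma z2 (a : ZMod 2) : a + a = 0 := CharTwo.add_self_eq_zero a

lemma z2eq {a b : ZMod 2} (h : a + b = 0) : a = b := by
  have := z2 b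
  calc a = a + b + b := by rw [add_assoc, this, add_zero]
    _ = b := by rw [h, zero_add]

lemma swap_sum (A : Finset ι) (F : ι → ι → ZMod 2) :
    ∑ d ∈ A, ∑ e ∈ A.erase d, F d e = ∑ d ∈ A, ∑ e ∈ A.erase d, F e d := by
  apply Finset.sum_comm'
  intro x y
  simp only [Finset.mem_erase]
  tauto

lemma symm_sum (A : Finset ι) (F : ι → ι → ZMod 2) (hF : ∀ d e, F d e = F e d) :
    ∑ d ∈ A, ∑ e ∈ A.erase d, F d e = 0 := by
  rw [Finset.sum_sigma']
  refine Finset.sum_involution (fun p _ => ⟨p.2, p.1⟩) ?_ ?_ ?_ ?_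
  · rintro ⟨a, b⟩ _
    simp only
    rw [hF a b]; exact z2 _
  · rintro ⟨a, b⟩ h _ h2
    simp only [Finset.mem_sigma, Finset.mem_erase] at h
    simp only [Sigma.mk.injEq] at h2
    exact h.2.1 h2.1
  · rintro ⟨a, b⟩ h
    simp only [Finset.mem_sigma, Finset.mem_erase] at h ⊢
    exact ⟨h.2.2, fun h' => h.2.1 h'.symm, h.1⟩
  · rintro ⟨a, b⟩ _
    rfl

lemma closed (Ls : List ((ι → ℕ) → ZMod 2)) : ∀ (A : Finset ι) (x : ι → ℕ),
    A.card = Ls.length + 1 →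
    ∑ d ∈ A, W Ls (A.erase d) (x + stp d) = ∑ d ∈ A, W Ls (A.erase d) x := by
  induction Ls with
  | nil => intro A x _; rfl
  | cons L Ls ih =>
    intro A x hA
    have ih' : ∀ d ∈ A, ∀ y, ∑ e ∈ A.erase d, W Ls ((A.erase d).erase e) (y + stp e)
        = ∑ e ∈ A.erase d, W Ls ((A.erase d).erase e) y := by
      intro d hd y
      apply ih
      rw [Finset.card_erase_of_mem hd, hA]; simp
    have hsym : ∀ d e, (A.erase d).erase e = (A.erase e).erase d := fun d e =>
      Finset.erase_right_comm
    simp only [W, add_mul, Finset.sum_add_distrib]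
    -- first group
    have h1 : ∑ d ∈ A, ∑ e ∈ A.erase d,
        L (x + stp d + stp e) * W Ls ((A.erase d).erase e) (x + stp d + stp e) = 0 := by
      apply symm_sum
      intro d e
      rw [hsym d e, add_right_comm]
    have h2 : ∑ d ∈ A, ∑ e ∈ A.erase d,
        L (x + stp d) * W Ls ((A.erase d).erase e) (x + stp d + stp e)
        = ∑ d ∈ A, ∑ e ∈ A.erase d, L (x + stp e) * W Ls ((A.erase d).erase e) (x + stp e) := by
      rw [swap_sum A (fun d e => L (x + stp e) * W Ls ((A.erase d).erase e) (x + stp e))]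
      apply Finset.sum_congr rfl
      intro d hd
      rw [← Finset.mul_sum, ih' d hd, Finset.mul_sum]
      apply Finset.sum_congr rfl
      intro e _
      rw [hsym d e]
    have h3 : ∑ d ∈ A, ∑ e ∈ A.erase d, L x * W Ls ((A.erase d).erase e) (x + stp e) = 0 := by
      have : ∑ d ∈ A, ∑ e ∈ A.erase d, L x * W Ls ((A.erase d).erase e) (x + stp e)
          = ∑ d ∈ A, ∑ e ∈ A.erase d, L x * W Ls ((A.erase d).erase e) x := by
        apply Finset.sum_congr rfl
        intro d hd
        rw [← Finset.mul_sum, ih' d hd, Finset.mul_sum]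
      rw [this]
      apply symm_sum
      intro d e
      rw [hsym d e]
    rw [h1, h2, h3, zero_add, add_zero]

lemma stokes (L : (ι → ℕ) → ZMod 2) (Ls : List ((ι → ℕ) → ZMod 2)) (A : Finset ι) (x : ι → ℕ)
    (hA : A.card = Ls.length + 1) :
    W (L :: Ls) A x = ∑ d ∈ A, (L (x + stp d) * W Ls (A.erase d) (x + stp d)
      + L x * W Ls (A.erase d) x) := by
  simp only [W, add_mul, Finset.sum_add_distrib]
  rw [← Finset.mul_sum, closed Ls A x hA, Finset.mul_sum]

lemma stp_ne {d e : ι} (h : e ≠ d) (x : ι → ℕ) : (x + stp d) e = x e := by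
  simp [stp, h]

lemma stp_self (d : ι) (x : ι → ℕ) : (x + stp d) d = x d + 1 := by
  simp [stp]

lemma W_zero (Ls : List ((ι → ℕ) → ZMod 2)) (e : ι) (c : ℕ) (L : (ι → ℕ) → ZMod 2) (v : ZMod 2)
    (hL : ∀ z, z e = c → L z = v) : ∀ (A : Finset ι) (x : ι → ℕ), L ∈ Ls → e ∉ A → x e = c →
    W Ls A x = 0 := by
  induction Ls with
  | nil => intro A x h; simp at h
  | cons L' Ls ih =>
    intro A x h heA hx
    simp only [W]
    apply Finset.sum_eq_zero
    intro d hd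
    have hed : e ≠ d := fun h => heA (h ▸ hd)
    have hx' : (x + stp d) e = c := by rw [stp_ne hed, hx]
    rcases List.mem_cons.1 h with rfl | h
    · rw [hL _ hx', hL _ hx, z2, zero_mul]
    · rw [ih (A.erase d) _ h (fun h => heA (Finset.mem_of_mem_erase h)) hx', mul_zero]

lemma W_ne (Ls : List ((ι → ℕ) → ZMod 2)) (L : (ι → ℕ) → ZMod 2) :
    ∀ (A : Finset ι) (x : ι → ℕ), L ∈ Ls → W Ls A x ≠ 0 →
    ∃ u v : ι → ℕ, L u ≠ L v ∧ (∀ i, x i ≤ u i ∧ u i ≤ x i + if i ∈ A then 1 else 0) ∧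
      (∀ i, x i ≤ v i ∧ v i ≤ x i + if i ∈ A then 1 else 0) := by
  induction Ls with
  | nil => intro A x h; simp at h
  | cons L' Ls ih =>
    intro A x h hW
    simp only [W] at hW
    obtain ⟨d, hd, hne⟩ := Finset.exists_ne_zero_of_sum_ne_zero hW
    have key : ∀ u : ι → ℕ, (∀ i, (x + stp d) i ≤ u i ∧
        u i ≤ (x + stp d) i + if i ∈ A.erase d then 1 else 0) →
        (∀ i, x i ≤ u i ∧ u i ≤ x i + if i ∈ A then 1 else 0) := by
      intro u hu i
      have := hu i
      by_cases hid : i = d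
      · subst hid
        rw [stp_self] at this
        simp at this
        simp [hd]
        omega
      · rw [stp_ne hid] at this
        simpa [hid] using this
    rcases List.mem_cons.1 h with rfl | h
    · refine ⟨x + stp d, x, ?_, ?_, ?_⟩
      · intro h
        apply hne
        rw [h, z2, zero_mul]
      · apply key
        intro i
        simp
      · intro i; simp
    · obtain ⟨u, v, h1, h2, h3⟩ := ih _ _ h (right_ne_zero_of_mul hne)
      exact ⟨u, v, h1, key u h2, key v h3⟩

/-- Sum over the box in the directions of the list. -/
def B (p : ℕ) : List ι → ((ι → ℕ) → ZMod 2) → (ι → ℕ) → ZMod 2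
  | [], g, x => g x
  | d :: l, g, x => ∑ k ∈ Finset.range p, B p l g (Function.update x d k)

lemma B_add (p : ℕ) (l : List ι) (g h : (ι → ℕ) → ZMod 2) : ∀ x,
    B p l (fun y => g y + h y) x = B p l g x + B p l h x := by
  induction l with
  | nil => intro x; rfl
  | cons d l ih => intro x; simp only [B, ih, Finset.sum_add_distrib]

lemma B_zero (p : ℕ) (l : List ι) : ∀ x, B p l (fun _ => 0) x = 0 := by
  induction l with
  | nil => intro x; rfl
  | cons d l ih => intro x; simp only [B, ih, Finset.sum_const_zero]

lemma B_sum (p : ℕ) (l : List ι) (A : Finset ι) (g : ι → (ι → ℕ) → ZMod 2) (x : ι → ℕ) :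
    B p l (fun y => ∑ d ∈ A, g d y) x = ∑ d ∈ A, B p l (g d) x := by
  induction A using Finset.induction_on with
  | empty => simp [B_zero]
  | insert a s ha ih => simp only [Finset.sum_insert ha, B_add, ih]

lemma B_shift (p : ℕ) (l : List ι) (d : ι) (g : (ι → ℕ) → ZMod 2) (hd : d ∉ l) : ∀ x,
    B p l (fun y => g (y + stp d)) x = B p l g (x + stp d) := by
  induction l with
  | nil => intro x; rfl
  | cons e l ih =>
    intro x
    simp only [List.mem_cons, not_or] at hd
    simp only [B, ih hd.2]
    apply Finset.sum_congr rfl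
    intro k _
    congr 1
    ext i
    by_cases hi : i = e
    · subst hi
      rw [stp_ne (fun h => hd.1 h.symm)]; simp
    · by_cases hid : i = d
      · subst hid; rw [stp_self]; simp [hi, stp]
      · rw [stp_ne hid]; simp [hi, stp_ne hid]

lemma B_congr (p : ℕ) (l : List ι) (d : ι) (c : ℕ) (g h : (ι → ℕ) → ZMod 2) (hd : d ∉ l)
    (hgh : ∀ y, y d = c → g y = h y) : ∀ x, x d = c → B p l g x = B p l h x := by
  induction l with
  | nil => intro x hx; exact hgh x hx
  | cons e l ih =>
    intro x hx
    simp only [List.mem_cons, not_or] at hd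
    simp only [B]
    apply Finset.sum_congr rfl
    intro k _
    apply ih hd.2
    simp [hd.1, hx]

lemma tele (p : ℕ) (F : ℕ → ZMod 2) :
    ∑ k ∈ Finset.range p, (F (k + 1) + F k) = F p + F 0 := by
  induction p with
  | zero => simp [z2]
  | succ n ih =>
    rw [Finset.sum_range_succ, ih]
    linear_combination z2 (F n)

lemma B_tele (p : ℕ) (l : List ι) (d : ι) (g : (ι → ℕ) → ZMod 2) (hd : d ∉ l) (x : ι → ℕ) :
    B p (d :: l) (fun y => g (y + stp d) + g y) x =
      B p l g (Function.update x d p) + B p l g (Function.update x d 0) := by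
  simp only [B, B_add, B_shift p l d g hd]
  rw [← tele p (fun k => B p l g (Function.update x d k))]
  apply Finset.sum_congr rfl
  intro k _
  congr 2
  ext i
  by_cases hid : i = d
  · subst hid; rw [stp_self]; simp
  · rw [stp_ne hid]; simp [hid]

lemma B_tele_zero (p : ℕ) (l : List ι) (d : ι) (g : (ι → ℕ) → ZMod 2) (hl : l.Nodup)
    (hd : d ∈ l) (h0 : ∀ y, y d = 0 → g y = 0) (hp : ∀ y, y d = p → g y = 0) : ∀ x,
    B p l (fun y => g (y + stp d) + g y) x = 0 := by
  induction l with
  | nil => simp at hd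
  | cons e l ih =>
    intro x
    rw [List.nodup_cons] at hl
    by_cases hde : d = e
    · subst hde
      rw [B_tele p l d g hl.1, B_congr p l d p g (fun _ => 0) hl.1 hp _ (by simp),
        B_congr p l d 0 g (fun _ => 0) hl.1 h0 _ (by simp), B_zero, B_zero, add_zero]
    · have : d ∈ l := by simpa [hde] using hd
      simp only [B]
      exact Finset.sum_eq_zero fun k _ => ih hl.2 this _

lemma B_ne (p : ℕ) (l : List ι) (g : (ι → ℕ) → ZMod 2) (hl : l.Nodup) : ∀ x, B p l g x ≠ 0 →
    ∃ y, g y ≠ 0 ∧ (∀ i ∈ l, y i < p) ∧ ∀ i ∉ l, y i = x i := by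
  induction l with
  | nil => intro x hx; exact ⟨x, hx, by simp, by simp⟩
  | cons d l ih =>
    intro x hx
    rw [List.nodup_cons] at hl
    obtain ⟨k, hk, hne⟩ := Finset.exists_ne_zero_of_sum_ne_zero hx
    obtain ⟨y, h1, h2, h3⟩ := ih hl.2 _ hne
    refine ⟨y, h1, ?_, ?_⟩
    · intro i hi
      rcases List.mem_cons.1 hi with rfl | hi
      · rw [h3 _ hl.1]; simpa using hk
      · exact h2 i hi
    · intro i hi
      simp only [List.mem_cons, not_or] at hi
      rw [h3 i hi.2]; simp [hi.1]

lemma main_sum (p : ℕ) (L : ι → (ι → ℕ) → ZMod 2) (h0 : ∀ d y, y d = 0 → L d y = 0)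
    (hp : ∀ d y, y d = p → L d y = 1) (l : List ι) (hl : l.Nodup) :
    ∀ x, B p l (W (l.map L) l.toFinset) x = 1 := by
  induction l with
  | nil => intro x; rfl
  | cons d l ih =>
    intro x
    have hl' := hl
    rw [List.nodup_cons] at hl
    have hcard : (d :: l).toFinset.card = (l.map L).length + 1 := by
      rw [List.toFinset_card_of_nodup hl']; simp
    have hst : W ((d :: l).map L) (d :: l).toFinset = fun y => ∑ e ∈ (d :: l).toFinset,
        ((fun z => L d z * W (l.map L) ((d :: l).toFinset.erase e) z) (y + stp e)
        + (fun z => L d z * W (l.map L) ((d :: l).toFinset.erase e) z) y) := by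
      funext y
      rw [List.map_cons]
      exact stokes _ _ _ _ hcard
    rw [hst, B_sum, Finset.sum_eq_single d]
    · have her : (d :: l).toFinset.erase d = l.toFinset := by
        rw [List.toFinset_cons, Finset.erase_insert (by simpa using hl.1)]
      rw [her, B_tele p l d (fun z => L d z * W (l.map L) l.toFinset z) hl.1,
        B_congr p l d 0 (fun z => L d z * W (l.map L) l.toFinset z) (fun _ => 0) hl.1
          (fun y hy => by rw [h0 d y hy, zero_mul]) (Function.update x d 0) (by simp),
        B_congr p l d p (fun z => L d z * W (l.map L) l.toFinset z) (W (l.map L) l.toFinset) hl.1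
          (fun y hy => by rw [hp d y hy, one_mul]) (Function.update x d p) (by simp),
        ih hl.2, B_zero, add_zero]
    · intro e he hed
      have hel : e ∈ l := by simpa [hed] using he
      have hm : L e ∈ l.map L := List.mem_map_of_mem hel
      apply B_tele_zero p (d :: l) e
        (fun z => L d z * W (l.map L) ((d :: l).toFinset.erase e) z) hl' (by simp [hel])
      · intro y hy
        rw [W_zero (l.map L) e 0 (L e) 0 (h0 e) _ y hm (by simp) hy, mul_zero]
      · intro y hy
        rw [W_zero (l.map L) e p (L e) 1 (hp e) _ y hm (by simp) hy, mul_zero]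
    · intro h; simp at h

lemma kuhn {n : ℕ} (p : ℕ) (L : Fin n → (Fin n → ℕ) → ZMod 2)
    (h0 : ∀ d y, y d = 0 → L d y = 0) (hp : ∀ d y, y d = p → L d y = 1) :
    ∃ y : Fin n → ℕ, (∀ i, y i < p) ∧ ∀ d, ∃ u v : Fin n → ℕ, L d u = 0 ∧ L d v = 1 ∧
      (∀ i, y i ≤ u i ∧ u i ≤ y i + 1) ∧ (∀ i, y i ≤ v i ∧ v i ≤ y i + 1) := by
  have hnd := List.nodup_finRange n
  have h := main_sum p L h0 hp (List.finRange n) hnd 0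
  obtain ⟨y, h1, h2, _⟩ := B_ne p _ _ hnd 0 (by rw [h]; exact one_ne_zero)
  refine ⟨y, fun i => h2 i (by simp), fun d => ?_⟩
  obtain ⟨u, v, huv, hu, hv⟩ := W_ne _ (L d) _ y (List.mem_map_of_mem (by simp)) h1
  simp at hu hv
  have hz : ∀ a b : ZMod 2, a ≠ b → (a = 0 ∧ b = 1) ∨ (a = 1 ∧ b = 0) := by decide
  rcases hz _ _ huv with ⟨ha, hb⟩ | ⟨ha, hb⟩
  · exact ⟨u, v, ha, hb, hu, hv⟩
  · exact ⟨v, u, hb, ha, hv, hu⟩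

theorem brouwer {n : ℕ} (f : (Fin n → ℝ) → (Fin n → ℝ)) (hc : ContinuousOn f (Set.Icc 0 1))
    (hm : Set.MapsTo f (Set.Icc 0 1) (Set.Icc 0 1)) :
    ∃ x ∈ Set.Icc (0 : Fin n → ℝ) 1, f x = x := by
  classical
  by_contra! hcon
  have hK : IsCompact (Set.Icc (0 : Fin n → ℝ) 1) := isCompact_Icc
  have hg : ContinuousOn (fun x => f x - x) (Set.Icc 0 1) := hc.sub continuousOn_id
  obtain ⟨z, hz, hmin⟩ := hK.exists_isMinOn ⟨0, by simp⟩ hg.norm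
  have hpos : 0 < ‖f z - z‖ := norm_pos_iff.2 (sub_ne_zero.2 (hcon z hz))
  obtain ⟨δ, hδ, hU⟩ := Metric.uniformContinuousOn_iff.1
    (hK.uniformContinuousOn_of_continuous hg) _ hpos
  obtain ⟨q, hq⟩ := exists_nat_one_div_lt hδ
  set p : ℕ := q + 1 with hpdef
  have hp0 : (0 : ℝ) < p := by positivity
  let t : (Fin n → ℕ) → Fin n → ℝ := fun x i => (x i : ℝ) / p
  have ht : ∀ x : Fin n → ℕ, (∀ i, x i ≤ p) → t x ∈ Set.Icc (0 : Fin n → ℝ) 1 := by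
    intro x hx
    refine ⟨fun i => ?_, fun i => ?_⟩
    · simp only [t, Pi.zero_apply]; positivity
    · simp only [t, Pi.one_apply]
      rw [div_le_one hp0]
      exact_mod_cast hx i
  obtain ⟨y, hy, huv⟩ := kuhn p (fun i x => if x i = 0 then 0 else if x i = p then 1 else
      if t x i ≤ f (t x) i then 0 else 1)
    (fun d y h => by simp [h]) (fun d y h => by simp [h, hpdef])
  have hty := ht y (fun i => (hy i).le)
  have hdist : ∀ u : Fin n → ℕ, (∀ i, y i ≤ u i ∧ u i ≤ y i + 1) →
      ∀ i, |(f (t u) - t u) i - (f (t y) - t y) i| < ‖f z - z‖ := by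
    intro u hu i
    have hd : dist (t u) (t y) < δ := by
      rw [dist_pi_lt_iff hδ]
      intro i
      refine lt_of_le_of_lt ?_ hq
      have e : t u i - t y i = ((u i : ℝ) - y i) / p := by simp only [t]; ring
      have h1 : (y i : ℝ) ≤ u i := by exact_mod_cast (hu i).1
      have h2 : (u i : ℝ) ≤ y i + 1 := by exact_mod_cast (hu i).2
      rw [Real.dist_eq, e, abs_of_nonneg (div_nonneg (by linarith) hp0.le), hpdef]
      push_cast
      gcongr
      linarith
    have := hU (t u) (ht u fun i => by have := hu i; have := hy i; omega) (t y) hty hd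
    rw [dist_pi_lt_iff hpos] at this
    exact this i
  have hlt : ‖f (t y) - t y‖ < ‖f z - z‖ := by
    rw [pi_norm_lt_iff hpos]
    intro i
    obtain ⟨u, v, hu0, hv1, hu, hv⟩ := huv i
    have hub := hm (ht u fun i => by have := hu i; have := hy i; omega)
    have hvb := hm (ht v fun i => by have := hv i; have := hy i; omega)
    have hu' : 0 ≤ (f (t u) - t u) i := by
      rw [Pi.sub_apply, sub_nonneg]
      by_cases h : u i = 0
      · have := hub.1 i
        simpa [t, h] using this
      · by_cases h' : u i = p
        · simp [h', hpdef] at hu0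
        · by_contra h3
          simp [h, h', h3] at hu0
    have hv' : (f (t v) - t v) i ≤ 0 := by
      rw [Pi.sub_apply, sub_nonpos]
      by_cases h : v i = 0
      · simp [h] at hv1
      · by_cases h' : v i = p
        · have := hvb.2 i
          simpa [t, h', hp0.ne'] using this
        · by_contra h3
          simp [h, h', (not_le.1 h3).le] at hv1
    have h1 := abs_lt.1 (hdist u hu i)
    have h2 := abs_lt.1 (hdist v hv i)
    rw [Real.norm_eq_abs, abs_lt]
    constructor <;> linarith
  exact absurd (hmin hty) (not_le.2 hlt)

end CubeBrouwer

theorem closed_subcollection_solutions (M M₁ : ℕ) (hM : M₁ ≤ M)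
    (f : (Fin M → ℝ) → (Fin M → ℝ))
    (hc : ContinuousOn f (Set.Icc 0 1))
    (hm : Set.MapsTo f (Set.Icc 0 1) (Set.Icc 0 1))
    (hdep : ∀ x y : Fin M → ℝ, (∀ i : Fin M, (i : ℕ) < M₁ → x i = y i) →
      ∀ i : Fin M, (i : ℕ) < M₁ → f x i = f y i) :
    (∃ x ∈ Set.Icc (0 : Fin M → ℝ) 1, ∀ i : Fin M, (i : ℕ) < M₁ → x i = f x i) ∧
    (∀ x ∈ Set.Icc (0 : Fin M → ℝ) 1,
      (∀ i : Fin M, (i : ℕ) < M₁ → x i = f x i) →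
      ∃ y ∈ Set.Icc (0 : Fin M → ℝ) 1,
        (∀ i : Fin M, (i : ℕ) < M₁ → y i = x i) ∧ f y = y) := by
  constructor
  · obtain ⟨x, hx, h⟩ := CubeBrouwer.brouwer f hc hm
    exact ⟨x, hx, fun i _ => by rw [h]⟩
  · intro x hx hfx
    obtain ⟨y, hy, h⟩ := CubeBrouwer.brouwer
      (fun y i => if (i : ℕ) < M₁ then x i else f y i) (by
        rw [continuousOn_pi]
        intro i
        by_cases hi : (i : ℕ) < M₁
        · simp only [hi, if_true]; exact continuousOn_const
        · simp only [hi, if_false]; exact continuousOn_pi.1 hc i) (by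
        intro y hy
        have := hm hy
        refine ⟨fun i => ?_, fun i => ?_⟩
        · by_cases hi : (i : ℕ) < M₁
          · simp only [hi, if_true]; exact hx.1 i
          · simp only [hi, if_false]; exact this.1 i
        · by_cases hi : (i : ℕ) < M₁
          · simp only [hi, if_true]; exact hx.2 i
          · simp only [hi, if_false]; exact this.2 i)
    have hyx : ∀ i : Fin M, (i : ℕ) < M₁ → y i = x i := by
      intro i hi
      have := congrFun h i
      simp only [hi, if_true] at this
      exact this.symm
    refine ⟨y, hy, hyx, ?_⟩
    funext i
    by_cases hi : (i : ℕ) < M₁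
    · rw [hdep y x hyx i hi, ← hfx i hi, hyx i hi]
    · have := congrFun h i
      simpa only [hi, if_false] using this
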